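/- arXiv:1001.0253 — 3 statements merged into one kernel-verified Lean document; each statement's English description precedes it below -/
import Mathlib

section
/- Let C be a nonempty finite alphabet and let Σ ⊆ 𝟚^ℤ be a subshift with Σ ≠ 𝟚^ℤ. Then there exist k ∈ ℕ with k ≥ 1 and a set E ⊆ 𝟚^k with E ∩ L_k(Σ) = ∅ such that E is strongly freezing and there is a bijection ξ : L_k(Σ) × C → E. -/
/-- The configuration space over alphabet `B`. -/
abbrev Config (B : Type*) := ℤ → B

/-- The shift map `σ(x)_i = x_{i+1}`. -/
def shift {B : Type*} : Config B → Config B := fun x i => x (i + 1)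

/-- A subshift: a closed, shift-invariant subset of the configuration space
(`Bool` carrying the discrete topology, `Config Bool` the product topology). -/
def IsSubshift (S : Set (Config Bool)) : Prop :=
  IsClosed S ∧ shift '' S = S

/-- `L_k(Σ)`: the words of length `k` occurring in configurations of `Σ` at
positions `[0, k)`. -/
def Lwords (S : Set (Config Bool)) (k : ℕ) : Set (Fin k → Bool) :=
  {w | ∃ x ∈ S, ∀ j : Fin k, x ((j : ℕ) : ℤ) = w j}

/-- A set `E` of words of length `k` is strongly freezing if for `1 ≤ i < k` no
configuration carries a word of `E` both at position `0` and at position `i`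
(equivalently, `E·𝟚^i ∩ 𝟚^i·E = ∅`). -/
def StronglyFreezingSet {k : ℕ} (E : Set (Fin k → Bool)) : Prop :=
  ∀ i : ℕ, 1 ≤ i → i < k → ∀ x : Config Bool,
    ¬ ((fun j : Fin k => x ((j : ℕ) : ℤ)) ∈ E ∧
       (fun j : Fin k => x ((i : ℤ) + ((j : ℕ) : ℤ))) ∈ E)

/-!
Since `S` is not dense, some word is forbidden, so by submultiplicativity `S` has, for some `l`,
fewer than half of the `2 ^ l` words of length `l`; in particular some `u` of length `l` is
forbidden, and `S` has fewer than `2 ^ l` words of length `n = l + 1`. The code words are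
`0ⁿ 1u 1∗ ⋯ 1∗ 1` with `q` blocks `1∗` of length `n`, whose `l` letters `∗` are free. They contain
`u`, hence do not occur in `S`, and they are strongly freezing because a window `0ⁿ` cannot avoid
the ones at the multiples of `n`. Each block offers `2 ^ l` choices, more than the words of length
`n` in `S`, so for large `q` there are enough code words to encode all pairs.
-/

section Counting

lemma exists_mul_pow_lt_pow {a b : ℕ} (hab : a < b) (c : ℕ) : ∃ N : ℕ, c * a ^ N < b ^ N := by
  have hb : (0 : ℚ) < b := by exact_mod_cast hab.pos
  obtain ⟨N, hN⟩ := exists_pow_lt_of_lt_one (show (0 : ℚ) < 1 / (c + 1) by positivity)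
    ((div_lt_one hb).2 (Nat.cast_lt.2 hab))
  rw [div_pow, div_lt_div_iff₀ (by positivity) (by positivity), one_mul] at hN
  refine ⟨N, ?_⟩
  calc c * a ^ N ≤ a ^ N * (c + 1) := by linarith [Nat.zero_le (a ^ N)]
    _ < b ^ N := by exact_mod_cast hN

lemma ncard_forall_mem_eq {ι α : Type*} [Fintype ι] [Fintype α] (J : Finset ι)
    (b : ι → α) :
    {w : ι → α | ∀ j ∈ J, w j = b j}.ncard = Fintype.card α ^ (Fintype.card ι - J.card) := by
  classical
  have h_pi : {w : ι → α | ∀ j ∈ J, w j = b j} =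
      Fintype.piFinset fun j => if j ∈ J then {b j} else Finset.univ := by
    ext w
    simp only [Set.mem_ofPred_eq, Finset.mem_coe, Fintype.mem_piFinset]
    refine forall_congr' fun j => ?_
    by_cases hj : j ∈ J <;> simp [hj]
  rw [h_pi, Set.ncard_coe_finset, Fintype.card_piFinset]
  simp only [apply_ite Finset.card, Finset.card_singleton, Finset.card_univ]
  rw [Finset.prod_ite, Finset.prod_const_one, one_mul, Finset.prod_const, ← Finset.card_compl]
  congr 2
  ext j
  simp

end Counting

section Language

variable {S : Set (Config Bool)}

lemma shift_iterate_apply {B : Type*} (n : ℕ) (x : Config B) (i : ℤ) :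
    shift^[n] x i = x (i + n) := by
  induction n generalizing i with
  | zero => simp
  | succ n ih =>
    rw [Function.iterate_succ_apply', shift, ih, Nat.cast_succ, add_assoc, add_comm (1 : ℤ)]

lemma window_mem_Lwords (hS : Set.MapsTo shift S S) {x : Config Bool} (hx : x ∈ S) (p k : ℕ) :
    (fun j : Fin k => x ((p : ℤ) + (j : ℕ))) ∈ Lwords S k :=
  ⟨shift^[p] x, hS.iterate p hx, fun j => by rw [shift_iterate_apply, add_comm]⟩

lemma dense_of_forall_Lwords_eq_univ (hS : Set.MapsTo shift S S)
    (hL : ∀ k, Lwords S k = Set.univ) : Dense S := by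
  refine fun x => mem_closure_iff.2 fun U hU hxU => ?_
  obtain ⟨I, V, hV, hIU⟩ := isOpen_pi_iff.1 hU x hxU
  let M := I.sup Int.natAbs
  -- Words are read from position `0`, so the window `[-M, M]` of `x` is first found at `[0, 2M]`.
  obtain ⟨y, hy, hyx⟩ : (fun j : Fin (2 * M + 1) => x ((j : ℕ) - M)) ∈ Lwords S (2 * M + 1) :=
    hL _ ▸ Set.mem_univ _
  refine ⟨shift^[M] y, hIU fun i hi => ?_, hS.iterate M hy⟩
  have hiM : i.natAbs ≤ M := Finset.le_sup (f := Int.natAbs) hi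
  have h_eq : shift^[M] y i = x i := by
    have h := hyx ⟨(i + M).toNat, by omega⟩
    dsimp only at h
    rwa [Int.toNat_of_nonneg (by omega), add_sub_cancel_right, ← shift_iterate_apply M y i] at h
  exact h_eq ▸ (hV i hi).2

lemma ncard_Lwords_le (S : Set (Config Bool)) (k : ℕ) : (Lwords S k).ncard ≤ 2 ^ k := by
  simpa using Set.ncard_le_card (Lwords S k)

lemma ncard_Lwords_lt_iff {k : ℕ} : (Lwords S k).ncard < 2 ^ k ↔ Lwords S k ≠ Set.univ := by
  refine ⟨?_, fun h => by simpa using Set.ncard_lt_card h⟩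
  rintro h h_univ
  simp [h_univ] at h

lemma ncard_Lwords_add_le (hS : Set.MapsTo shift S S) (a b : ℕ) :
    (Lwords S (a + b)).ncard ≤ (Lwords S a).ncard * (Lwords S b).ncard := by
  have h_sub : Lwords S (a + b) ⊆ Fin.appendEquiv a b '' (Lwords S a ×ˢ Lwords S b) := by
    rintro w ⟨x, hx, hxw⟩
    refine ⟨(fun j => x (j : ℕ), fun j => x ((a : ℤ) + (j : ℕ))),
      ⟨⟨x, hx, fun _ => rfl⟩, window_mem_Lwords hS hx a b⟩, funext fun j => ?_⟩
    rw [← hxw j]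
    induction j using Fin.addCases <;> simp [Fin.appendEquiv]
  calc (Lwords S (a + b)).ncard
      ≤ (Fin.appendEquiv a b '' (Lwords S a ×ˢ Lwords S b)).ncard := Set.ncard_le_ncard h_sub
    _ = (Lwords S a).ncard * (Lwords S b).ncard := by
      rw [Set.ncard_image_of_injective _ (Equiv.injective _), Set.ncard_prod]

lemma ncard_Lwords_mul_le (hS : Set.MapsTo shift S S) (a q : ℕ) :
    (Lwords S (a * q)).ncard ≤ (Lwords S a).ncard ^ q := by
  induction q with
  | zero => simpa using ncard_Lwords_le S 0
  | succ q ih =>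
    rw [Nat.mul_succ, pow_succ]
    exact (ncard_Lwords_add_le hS _ _).trans (Nat.mul_le_mul_right _ ih)

lemma exists_mul_ncard_Lwords_lt (hS : Set.MapsTo shift S S) (hd : ¬ Dense S) (c : ℕ) :
    ∃ l : ℕ, c * (Lwords S l).ncard < 2 ^ l := by
  obtain ⟨m, hm⟩ : ∃ m, Lwords S m ≠ Set.univ := by
    by_contra! hL
    exact hd (dense_of_forall_Lwords_eq_univ hS hL)
  obtain ⟨N, hN⟩ := exists_mul_pow_lt_pow (ncard_Lwords_lt_iff.2 hm) c
  refine ⟨m * N, ?_⟩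
  calc c * (Lwords S (m * N)).ncard ≤ c * (Lwords S m).ncard ^ N := by
        gcongr; exact ncard_Lwords_mul_le hS m N
    _ < (2 ^ m) ^ N := hN
    _ = 2 ^ (m * N) := (pow_mul ..).symm

lemma exists_ncard_Lwords_mul_le_pow (hS : Set.MapsTo shift S S) {n b : ℕ}
    (hb : (Lwords S n).ncard < b) (r s c : ℕ) :
    ∃ q : ℕ, (Lwords S (n * (q + r) + s)).ncard * c ≤ b ^ q := by
  obtain ⟨q, hq⟩ := exists_mul_pow_lt_pow hb (c * 2 ^ s * (Lwords S n).ncard ^ r)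
  refine ⟨q, ?_⟩
  calc (Lwords S (n * (q + r) + s)).ncard * c
      ≤ ((Lwords S n).ncard ^ (q + r) * 2 ^ s) * c := by
        gcongr
        exact (ncard_Lwords_add_le hS _ _).trans
          (Nat.mul_le_mul (ncard_Lwords_mul_le hS n _) (ncard_Lwords_le S s))
    _ = c * 2 ^ s * (Lwords S n).ncard ^ r * (Lwords S n).ncard ^ q := by ring
    _ ≤ b ^ q := hq.le

end Language

section CodeWords

variable {n q : ℕ} {u : ℕ → Bool}

lemma StronglyFreezingSet.mono {k : ℕ} {E F : Set (Fin k → Bool)} (hF : StronglyFreezingSet F)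
    (hEF : E ⊆ F) : StronglyFreezingSet E :=
  fun i hi hik x h => hF i hi hik x ⟨hEF h.1, hEF h.2⟩

/-- The letters prescribed in code words with block length `n`: `n` zeros, then a one at each
positive multiple of `n`, and the word `u` from position `n + 1` on. Only its values at
`fixedPositions` matter. -/
def codeTemplate (n : ℕ) (u : ℕ → Bool) (p : ℕ) : Bool :=
  if p < n then false else if n ∣ p then true else u (p - (n + 1))

/-- The positions at which a code word with `q` free blocks follows the template: the first two
blocks and all multiples of `n`. -/
def fixedPositions (n q : ℕ) : Finset (Fin (n * (q + 2) + 1)) :=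
  {j | (j : ℕ) < 2 * n ∨ n ∣ j}

lemma mem_fixedPositions {j : Fin (n * (q + 2) + 1)} :
    j ∈ fixedPositions n q ↔ (j : ℕ) < 2 * n ∨ n ∣ j :=
  Finset.mem_filter_univ j

/-- The code words `0ⁿ 1u 1∗ ⋯ 1∗ 1` with `q` blocks `1∗` of length `n` whose last `n - 1` letters
are free. -/
def codeWords (n q : ℕ) (u : ℕ → Bool) : Set (Fin (n * (q + 2) + 1) → Bool) :=
  {w | ∀ j ∈ fixedPositions n q, w j = codeTemplate n u j}

lemma apply_eq_false_of_mem_codeWords {w : Fin (n * (q + 2) + 1) → Bool} (hw : w ∈ codeWords n q u)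
    {j : Fin (n * (q + 2) + 1)} (hj : (j : ℕ) < n) : w j = false := by
  rw [hw j (mem_fixedPositions.2 (by omega)), codeTemplate, if_pos hj]

lemma apply_eq_true_of_mem_codeWords {w : Fin (n * (q + 2) + 1) → Bool} (hw : w ∈ codeWords n q u)
    {j : Fin (n * (q + 2) + 1)} (hj : n ≤ j) (hnj : n ∣ j) : w j = true := by
  rw [hw j (mem_fixedPositions.2 (.inr hnj)), codeTemplate,
    if_neg (not_lt.2 hj), if_pos hnj]

lemma apply_eq_of_mem_codeWords {w : Fin (n * (q + 2) + 1) → Bool} (hw : w ∈ codeWords n q u)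
    {j : Fin (n * (q + 2) + 1)} {t : ℕ} (ht : t + 1 < n) (hj : (j : ℕ) = n + 1 + t) :
    w j = u t := by
  have hnj : ¬ n ∣ j := by
    rw [hj, add_assoc, Nat.dvd_add_right n.dvd_refl]
    exact Nat.not_dvd_of_pos_of_lt (by omega) (by omega)
  rw [hw j (mem_fixedPositions.2 (by omega)), codeTemplate,
    if_neg (by omega), if_neg hnj, hj, Nat.add_sub_cancel_left]

lemma card_fixedPositions_le (hn : 0 < n) (q : ℕ) :
    (fixedPositions n q).card ≤ 2 * n + (q + 1) := by
  have h_maps : ∀ j ∈ fixedPositions n q,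
      (j : ℕ) ∈ Finset.range (2 * n) ∪ (Finset.Icc 2 (q + 2)).image (n * ·) := by
    intro j hj
    rw [Finset.mem_union, Finset.mem_range, Finset.mem_image]
    refine or_iff_not_imp_left.2 fun hj2 => ?_
    obtain ⟨c, hc⟩ := (mem_fixedPositions.1 hj).resolve_left hj2
    refine ⟨c, Finset.mem_Icc.2 ⟨?_, ?_⟩, hc.symm⟩
    · exact Nat.le_of_mul_le_mul_left (by omega) hn
    · exact Nat.le_of_mul_le_mul_left (by omega) hn
  calc (fixedPositions n q).card
      ≤ (Finset.range (2 * n) ∪ (Finset.Icc 2 (q + 2)).image (n * ·)).card :=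
        Finset.card_le_card_of_injOn _ h_maps Fin.val_injective.injOn
    _ ≤ (Finset.range (2 * n)).card + (Finset.Icc 2 (q + 2)).card :=
        (Finset.card_union_le _ _).trans (Nat.add_le_add_left Finset.card_image_le _)
    _ = 2 * n + (q + 1) := by simp

lemma pow_le_ncard_codeWords (l q : ℕ) (u : ℕ → Bool) :
    (2 ^ l) ^ q ≤ (codeWords (l + 1) q u).ncard := by
  have h_free : l * q ≤ (l + 1) * (q + 2) + 1 - (fixedPositions (l + 1) q).card := by
    have h_le := card_fixedPositions_le (n := l + 1) l.succ_pos q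
    have h_len : (l + 1) * (q + 2) + 1 = l * q + (2 * (l + 1) + (q + 1)) := by ring
    omega
  rw [codeWords, ncard_forall_mem_eq, Fintype.card_bool, Fintype.card_fin, ← pow_mul]
  exact Nat.pow_le_pow_right two_pos h_free

/- If two code words overlap at distance `i`, the least multiple of `n` that is at least `i` carries
a one of the first word and one of the leading zeros of the second. -/
lemma stronglyFreezingSet_codeWords (hn : 0 < n) : StronglyFreezingSet (codeWords n q u) := by
  rintro i hi hik x ⟨h_first, h_second⟩
  obtain ⟨c, hic, hci⟩ : ∃ c, i ≤ n * c ∧ n * c < i + n :=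
    ⟨(i - 1) / n + 1, by have := Nat.lt_mul_div_succ (i - 1) hn; omega,
      by have := Nat.mul_div_le (i - 1) n; rw [Nat.mul_succ]; omega⟩
  have hcq : n * c ≤ n * (q + 2) := by
    refine Nat.mul_le_mul_left n (Nat.le_of_lt_succ (Nat.lt_of_mul_lt_mul_left (a := n) ?_))
    rw [Nat.mul_succ]
    omega
  have h_one : x ((n * c : ℕ) : ℤ) = true :=
    apply_eq_true_of_mem_codeWords h_first (j := ⟨n * c, by omega⟩)
      (Nat.le_of_dvd (hi.trans hic) (n.dvd_mul_right c)) (n.dvd_mul_right c)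
  have h_zero : x ((i : ℤ) + ((n * c - i : ℕ) : ℤ)) = false :=
    apply_eq_false_of_mem_codeWords h_second (j := ⟨n * c - i, by omega⟩) (by simp only; omega)
  rw [Nat.cast_sub hic, add_sub_cancel, h_one] at h_zero
  exact Bool.noConfusion h_zero

lemma disjoint_codeWords_Lwords {S : Set (Config Bool)} (hS : Set.MapsTo shift S S) {l : ℕ}
    (hln : l < n) (hu : u ∘ Fin.val ∉ Lwords S l) :
    Disjoint (codeWords n q u) (Lwords S (n * (q + 2) + 1)) := by
  refine Set.disjoint_left.2 fun w hw ⟨x, hx, hxw⟩ => hu ?_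
  convert window_mem_Lwords hS hx (n + 1) l using 1
  funext t
  have h_lt : n + 1 + t < n * (q + 2) + 1 := by nlinarith [t.isLt]
  rw [Function.comp_apply, ← Nat.cast_add, hxw ⟨n + 1 + t, h_lt⟩,
    apply_eq_of_mem_codeWords hw (t := t) (by omega) rfl]

end CodeWords

theorem binary_simulation_encoding_general {C : Type*} [Finite C] {S : Set (Config Bool)}
    (hS : Set.MapsTo shift S S) (hd : ¬ Dense S) :
    ∃ k : ℕ, 1 ≤ k ∧ ∃ E : Set (Fin k → Bool),
      E ∩ Lwords S k = ∅ ∧ StronglyFreezingSet E ∧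
      Nonempty ((Lwords S k × C) ≃ E) := by
  obtain ⟨l, hl⟩ := exists_mul_ncard_Lwords_lt hS hd 2
  have hl_ne : Lwords S l ≠ Set.univ := ncard_Lwords_lt_iff.1 (by omega)
  obtain ⟨v, hv⟩ := (Set.ne_univ_iff_exists_notMem _).1 hl_ne
  obtain ⟨u, rfl⟩ := Fin.val_injective.surjective_comp_right v
  have hl_succ : (Lwords S (l + 1)).ncard < 2 ^ l :=
    calc (Lwords S (l + 1)).ncard ≤ (Lwords S l).ncard * 2 ^ 1 :=
          (ncard_Lwords_add_le hS l 1).trans (Nat.mul_le_mul_left _ (ncard_Lwords_le S 1))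
      _ < 2 ^ l := by omega
  obtain ⟨q, hq⟩ := exists_ncard_Lwords_mul_le_pow hS hl_succ 2 1 (Nat.card C)
  obtain ⟨E, hE, hE_card⟩ := Set.exists_subset_card_eq (hq.trans (pow_le_ncard_codeWords l q u))
  refine ⟨_, Nat.le_add_left 1 _, E, ?_, (stronglyFreezingSet_codeWords l.succ_pos).mono hE, ?_⟩
  · exact ((disjoint_codeWords_Lwords hS l.lt_succ_self hv).mono_left hE).inter_eq
  · rw [← Finite.card_eq, Nat.card_prod, Nat.card_coe_set_eq, Nat.card_coe_set_eq, hE_card]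

/-- Binary encoding lemma: given a nonempty finite alphabet `C` and a proper
subshift `Σ ⊊ 𝟚^ℤ`, there are `k ≥ 1` and a strongly freezing set
`E ⊆ 𝟚^k ∖ L_k(Σ)` together with a bijection `ξ : L_k(Σ) × C → E`. -/
theorem binary_simulation_encoding (C : Type) [Fintype C] [Nonempty C]
    (S : Set (Config Bool)) (hS : IsSubshift S) (hne : S ≠ Set.univ) :
    ∃ k : ℕ, 1 ≤ k ∧ ∃ E : Set (Fin k → Bool),
      E ∩ Lwords S k = ∅ ∧ StronglyFreezingSet E ∧
      Nonempty ((Lwords S k × C) ≃ E) :=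
  binary_simulation_encoding_general (Set.mapsTo_iff_image_subset.2 hS.2.subset) fun hd =>
    hne (hS.1.closure_eq ▸ hd.closure_eq)
end

section
/- Let P be any family of subsets of 𝟚^ℤ such that there exists a non-surjective cellular automaton on 𝟚 whose limit set belongs to P and there exists a non-surjective cellular automaton on 𝟚 whose limit set does not belong to P. Then there exist two non-surjective cellular automata G₀, G₁ on 𝟚 sharing a common quiescent state q ∈ 𝟚 such that Ω_{G₀} ∈ P and Ω_{G₁} ∉ P. -/
/-- The global map induced by the local rule `f` of radius `r`. -/
def caMap {B : Type*} (r : ℕ) (f : (Fin (2 * r + 1) → B) → B) : Config B → Config B :=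
  fun x i => f fun j => x (i - (r : ℤ) + ((j : ℕ) : ℤ))

/-- `F` is a cellular automaton: it is induced by some local rule of some radius. -/
def IsCA {B : Type*} (F : Config B → Config B) : Prop :=
  ∃ (r : ℕ) (f : (Fin (2 * r + 1) → B) → B), F = caMap r f

/-- The limit set `Ω_F = ⋂_{j ∈ ℕ} F^j(B^ℤ)`. -/
def limitSet {B : Type*} (F : Config B → Config B) : Set (Config B) :=
  ⋂ j : ℕ, Set.range F^[j]

/-- A state `q` is quiescent for `F` if `F` fixes the uniform configuration of `q`. -/
def Quiescent {B : Type*} (F : Config B → Config B) (q : B) : Prop :=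
  F (fun _ => q) = (fun _ => q)

/-!
A cellular automaton `F` maps uniform configurations to uniform configurations, so it induces a
self-map of the finite alphabet. This self-map has a periodic point `q`, so `q` is quiescent for
some positive power of `F`; passing to that power changes neither the limit set nor
non-surjectivity. Each of the two given automata can thus be provided with a quiescent state, but
perhaps not the same one. To reconcile them, take a non-surjective automaton `H` for which *every*
state is quiescent: its limit set lies in `P` or outside `P`, so `H` can replace one of the two and
then shares the quiescent state of the other.
-/

theorem nonempty_periodicPts {α : Type*} [Finite α] [Nonempty α] (g : α → α) :
    (Function.periodicPts g).Nonempty := by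
  obtain ⟨a⟩ := ‹Nonempty α›
  obtain ⟨m, n, hmn, heq⟩ := Finite.exists_ne_map_eq_of_infinite (g^[·] a)
  wlog hlt : m < n generalizing m n
  · exact this n m hmn.symm heq.symm (by lia)
  refine ⟨g^[m] a, Function.mk_mem_periodicPts (Nat.sub_pos_of_lt hlt) ?_⟩
  calc g^[n - m] (g^[m] a) = g^[n] a := by
        rw [← Function.iterate_add_apply, Nat.sub_add_cancel hlt.le]
    _ = g^[m] a := heq.symm

theorem antitone_range_iterate {α : Type*} (g : α → α) :
    Antitone fun j : ℕ => Set.range g^[j] :=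
  antitone_nat_of_succ_le fun j => by
    rw [Function.iterate_succ]
    exact Set.range_comp_subset_range g g^[j]

theorem surjective_of_surjective_iterate {α : Type*} {g : α → α} {n : ℕ} (hn : n ≠ 0)
    (h : Function.Surjective g^[n]) : Function.Surjective g := by
  obtain ⟨m, rfl⟩ := Nat.exists_eq_succ_of_ne_zero hn
  rw [Function.iterate_succ'] at h
  exact h.of_comp

theorem nontrivial_of_not_surjective {ι B : Type*} {F : (ι → B) → ι → B}
    (hF : ¬ Function.Surjective F) : Nontrivial B := by
  by_contra h
  rw [not_nontrivial_iff_subsingleton] at h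
  exact hF fun x => ⟨x, Subsingleton.elim _ _⟩

section

variable {B : Type*} {F G : Config B → Config B}

theorem limitSet_iterate (F : Config B → Config B) {n : ℕ} (hn : n ≠ 0) :
    limitSet F^[n] = limitSet F := by
  simp only [limitSet, ← Function.iterate_mul]
  exact (antitone_range_iterate F).iInf_comp_tendsto_atTop
    (strictMono_mul_left_of_pos (Nat.pos_of_ne_zero hn)).tendsto_atTop

protected theorem IsCA.id : IsCA (id : Config B → Config B) :=
  ⟨0, fun w => w 0, by funext x i; simp [caMap]⟩

protected theorem IsCA.comp (hF : IsCA F) (hG : IsCA G) : IsCA (F ∘ G) := by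
  obtain ⟨r, f, rfl⟩ := hF
  obtain ⟨s, g, rfl⟩ := hG
  refine ⟨r + s, fun w => f fun j => g fun k => w ⟨j + k, by lia⟩, ?_⟩
  funext x i
  simp only [caMap, Function.comp_apply]
  congr! 5
  push_cast
  ring

protected theorem IsCA.iterate (hF : IsCA F) : ∀ n : ℕ, IsCA F^[n]
  | 0 => IsCA.id
  | n + 1 => (hF.iterate n).comp hF

theorem caMap_iterate_uniform (r : ℕ) (f : (Fin (2 * r + 1) → B) → B) (n : ℕ) (b : B) :
    (caMap r f)^[n] (fun _ => b) = fun _ => (fun c => f fun _ => c)^[n] b :=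
  have uniform : Function.Semiconj (fun (c : B) (_ : ℤ) => c) (fun c => f fun _ => c) (caMap r f) :=
    fun _ => rfl
  ((uniform.iterate_right n).eq b).symm

theorem IsCA.exists_quiescent_iterate [Finite B] [Nonempty B] (hF : IsCA F) :
    ∃ n ≠ 0, ∃ q, Quiescent F^[n] q := by
  obtain ⟨r, f, rfl⟩ := hF
  obtain ⟨q, n, hn, hq⟩ := nonempty_periodicPts fun c => f fun _ => c
  refine ⟨n, hn.ne', q, ?_⟩
  rw [Quiescent, caMap_iterate_uniform, hq.eq]

theorem IsCA.exists_quiescent_limitSet_eq [Finite B] (hF : IsCA F)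
    (hs : ¬ Function.Surjective F) :
    ∃ (G : Config B → Config B) (q : B),
      IsCA G ∧ ¬ Function.Surjective G ∧ Quiescent G q ∧ limitSet G = limitSet F := by
  have : Nontrivial B := nontrivial_of_not_surjective hs
  obtain ⟨n, hn, q, hq⟩ := hF.exists_quiescent_iterate
  exact ⟨F^[n], q, hF.iterate n, mt (surjective_of_surjective_iterate hn) hs, hq,
    limitSet_iterate F hn⟩

end

section

variable {B : Type*} [DecidableEq B]

/-- The consensus automaton with default state `a`: a cell keeps its state if its right neighbour
agrees with it, and is reset to `a` otherwise. It serves as a non-surjective automaton all of whose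
states are quiescent; for `B = Bool` and `a = false` it takes the conjunction of the two cells. -/
def consensus (a : B) : Config B → Config B :=
  fun x i => if x i = x (i + 1) then x i else a

theorem isCA_consensus (a : B) : IsCA (consensus a) := by
  refine ⟨1, fun w => if w 1 = w 2 then w 1 else a, ?_⟩
  funext x i
  have right_neighbour : i - 1 + 2 = i + 1 := by ring
  simp [consensus, caMap, right_neighbour]

theorem quiescent_consensus (a q : B) : Quiescent (consensus a) q :=
  funext fun _ => if_pos rfl

theorem eq_of_consensus_eq {a b : B} (hb : b ≠ a) {x : Config B} {i : ℤ}
    (h : consensus a x i = b) : x i = b ∧ x (i + 1) = b := by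
  unfold consensus at h
  split_ifs at h with agree
  · exact ⟨h, agree ▸ h⟩
  · exact absurd h.symm hb

-- The pattern `b a b` with `b ≠ a` has no preimage: its outer cells force the preimage `b b b b`.
theorem not_surjective_consensus [Nontrivial B] (a : B) :
    ¬ Function.Surjective (consensus a) := by
  obtain ⟨b, hb⟩ := exists_ne a
  intro h
  obtain ⟨x, hx⟩ := h fun i => if i = 1 then a else b
  have x_one : x 1 = b := (eq_of_consensus_eq hb (congrFun hx 0)).2
  have x_two : x 2 = b := (eq_of_consensus_eq hb (congrFun hx 2)).1
  have image_one : consensus a x 1 = a := congrFun hx 1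
  exact hb (by simpa [consensus, x_one, x_two] using image_one)

end

theorem exists_witnesses_with_common_quiescent_state_general {B : Type*} [Finite B]
    (P : Set (Set (Config B)))
    (h0 : ∃ F : Config B → Config B, IsCA F ∧ ¬ Function.Surjective F ∧ limitSet F ∈ P)
    (h1 : ∃ F : Config B → Config B, IsCA F ∧ ¬ Function.Surjective F ∧ limitSet F ∉ P) :
    ∃ (G₀ G₁ : Config B → Config B) (q : B),
      IsCA G₀ ∧ IsCA G₁ ∧ ¬ Function.Surjective G₀ ∧ ¬ Function.Surjective G₁ ∧
      Quiescent G₀ q ∧ Quiescent G₁ q ∧ limitSet G₀ ∈ P ∧ limitSet G₁ ∉ P := by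
  classical
  obtain ⟨F₀, hF₀, hs₀, mem₀⟩ := h0
  obtain ⟨F₁, hF₁, hs₁, notMem₁⟩ := h1
  have : Nontrivial B := nontrivial_of_not_surjective hs₀
  obtain ⟨a⟩ : Nonempty B := inferInstance
  by_cases h : limitSet (consensus a) ∈ P
  · obtain ⟨G, q, hG, hGs, hq, hlim⟩ := hF₁.exists_quiescent_limitSet_eq hs₁
    exact ⟨consensus a, G, q, isCA_consensus a, hG, not_surjective_consensus a, hGs,
      quiescent_consensus a q, hq, h, hlim ▸ notMem₁⟩
  · obtain ⟨G, q, hG, hGs, hq, hlim⟩ := hF₀.exists_quiescent_limitSet_eq hs₀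
    exact ⟨G, consensus a, q, hG, isCA_consensus a, hGs, not_surjective_consensus a,
      hq, quiescent_consensus a q, hlim ▸ mem₀, h⟩

/-- If a nontrivial property `P` over limit sets of non-surjective cellular automata
on `𝟚` holds for some of them and fails for another, then one can choose two
non-surjective witnesses `G₀ ∈ P`, `G₁ ∉ P` sharing a common quiescent state. -/
theorem exists_witnesses_with_common_quiescent_state (P : Set (Set (Config Bool)))
    (h0 : ∃ F : Config Bool → Config Bool, IsCA F ∧ ¬ Function.Surjective F ∧ limitSet F ∈ P)
    (h1 : ∃ F : Config Bool → Config Bool, IsCA F ∧ ¬ Function.Surjective F ∧ limitSet F ∉ P) :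
    ∃ (G₀ G₁ : Config Bool → Config Bool) (q : Bool),
      IsCA G₀ ∧ IsCA G₁ ∧ ¬ Function.Surjective G₀ ∧ ¬ Function.Surjective G₁ ∧
      Quiescent G₀ q ∧ Quiescent G₁ q ∧ limitSet G₀ ∈ P ∧ limitSet G₁ ∉ P :=
  exists_witnesses_with_common_quiescent_state_general P h0 h1
end

section
/- Let B be a finite alphabet with at least two letters and let u ∈ B^* be a nonempty word. Then there exists a strongly freezing word w ∈ B^* having u as a prefix. (In fact, w = u b^k works for any letter b ≠ u₀ and any k ≥ 1 such that b^k does not occur in u.) -/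
/-- A word `w` (of length `≥ 1`) is strongly freezing if for every `1 ≤ i < |w|`
no word of length `|w| + i` both begins and ends with `w`, i.e. `w` does not
overlap a shifted copy of itself. -/
def StronglyFreezingWord {B : Type*} (w : List B) : Prop :=
  1 ≤ w.length ∧ ∀ i : ℕ, 1 ≤ i → i < w.length →
    ¬ ∃ v : List B, v.length = w.length + i ∧ w <+: v ∧ w <:+ v

/-!
A nonempty word is strongly freezing exactly when its only borders (words that are both a prefix
and a suffix of it) are the empty word and itself. Let `t` be a word that avoids the first letter
`u₀` of `u` and does not occur in `u`, and let `x` be a nonempty border of `u ++ t`. Since `x`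
begins with `u₀`, it is not a suffix of `t`, so it ends with `t`; since `t` does not occur in `u`,
`x` is not a prefix of `u`, so it begins with `u`. Writing `u ++ t = p ++ x = x ++ s`, the words
`p` and `s` have the same letters, and `s` is a suffix of `t`. So `p` avoids `u₀`, hence is empty.
-/

section Borders

variable {B : Type*} {u t w x : List B}

/-- A border of a word is a word that is both a prefix and a suffix of it. Borders are the
overlaps of a word with its shifted copies. The empty word and the word itself are allowed. -/
def IsBorder (x w : List B) : Prop :=
  x <+: w ∧ x <:+ w

theorem exists_overlap_iff_exists_isBorder {i : ℕ} (hi : i ≤ w.length) :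
    (∃ v : List B, v.length = w.length + i ∧ w <+: v ∧ w <:+ v) ↔
      ∃ x : List B, x.length + i = w.length ∧ IsBorder x w := by
  constructor
  · rintro ⟨v, hv, hwv, p, rfl⟩
    have hp : p.length = i := by
      rw [List.length_append] at hv
      omega
    obtain ⟨x, rfl⟩ : p <+: w :=
      List.prefix_of_prefix_length_le (List.prefix_append p w) hwv (hp.trans_le hi)
    refine ⟨x, ?_, (List.prefix_append_right_inj p).mp hwv, List.suffix_append p x⟩
    rw [List.length_append, hp, add_comm]
  · rintro ⟨x, hx, ⟨s, hs⟩, p, hp⟩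
    refine ⟨p ++ x ++ s, ?_, ⟨s, by rw [hp]⟩, ⟨p, by rw [List.append_assoc, hs]⟩⟩
    have hs_length : x.length + s.length = w.length := by rw [← List.length_append, hs]
    rw [hp, List.length_append]
    omega

theorem stronglyFreezingWord_iff_forall_isBorder :
    StronglyFreezingWord w ↔ w ≠ [] ∧ ∀ x, IsBorder x w → x = [] ∨ x = w := by
  refine and_congr (Nat.one_le_iff_ne_zero.trans List.length_eq_zero_iff.not) ⟨?_, ?_⟩
  · intro h x hx
    by_contra! hne
    have hx_pos : 0 < x.length := List.length_pos_iff.mpr hne.1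
    have hx_lt : x.length < w.length :=
      hx.1.length_le.lt_of_ne fun hlen => hne.2 (hx.1.eq_of_length hlen)
    exact h (w.length - x.length) (by omega) (by omega)
      ((exists_overlap_iff_exists_isBorder (by omega)).mpr ⟨x, by omega, hx⟩)
  · intro h i hi hiw hv
    obtain ⟨x, hx, hxw⟩ := (exists_overlap_iff_exists_isBorder hiw.le).mp hv
    rcases h x hxw with rfl | rfl
    · exact hiw.ne (by simpa using hx)
    · omega

theorem IsBorder.eq_append_of_prefix (hx : IsBorder x (u ++ t)) (hux : u <+: x) (hu : u ≠ [])
    (ht : u.head hu ∉ t) : x = u ++ t := by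
  obtain ⟨⟨s, hs⟩, p, hp⟩ := hx
  have hps : p.Perm s := by
    rw [← List.perm_append_left_iff x, hs, ← hp]
    exact List.perm_append_comm
  have hst : s <:+ t := by
    obtain ⟨r, rfl⟩ := hux
    rw [List.append_assoc] at hs
    exact ⟨r, List.append_cancel_left hs⟩
  have hp_nil : p = [] := by
    by_contra hne
    have hhead : p.head hne = u.head hu := by
      have hpw : p <+: u ++ t := ⟨x, hp⟩
      rw [hpw.head hne, List.head_append_of_ne_nil hu]
    exact ht (hst.subset (hps.subset (hhead ▸ List.head_mem hne)))
  simpa only [hp_nil, List.nil_append] using hp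

theorem IsBorder.eq_nil_or_eq_append (hx : IsBorder x (u ++ t)) (hu : u ≠ [])
    (ht : u.head hu ∉ t) (htu : ¬ t <:+: u) : x = [] ∨ x = u ++ t := by
  refine or_iff_not_imp_left.mpr fun hx_ne => ?_
  have hhead : x.head hx_ne = u.head hu := by
    rw [hx.1.head hx_ne, List.head_append_of_ne_nil hu]
  rcases List.suffix_or_suffix_of_suffix hx.2 (List.suffix_append u t) with hxt | htx
  · exact absurd (hxt.subset (hhead ▸ List.head_mem hx_ne)) ht
  · rcases List.prefix_or_prefix_of_prefix hx.1 (List.prefix_append u t) with hxu | hux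
    · exact absurd (htx.isInfix.trans hxu.isInfix) htu
    · exact hx.eq_append_of_prefix hux hu ht

theorem stronglyFreezingWord_append (hu : u ≠ []) (ht : u.head hu ∉ t) (htu : ¬ t <:+: u) :
    StronglyFreezingWord (u ++ t) :=
  stronglyFreezingWord_iff_forall_isBorder.mpr
    ⟨List.append_ne_nil_of_left_ne_nil hu t, fun _ hx => hx.eq_nil_or_eq_append hu ht htu⟩

end Borders

theorem extend_to_strongly_freezing_general (B : Type*) [Nontrivial B] (u : List B) (hu : u ≠ []) :
    (∃ w : List B, StronglyFreezingWord w ∧ u <+: w) ∧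
    (∀ t : List B, u.head hu ∉ t → ¬ t <:+: u → StronglyFreezingWord (u ++ t)) := by
  refine ⟨?_, fun t => stronglyFreezingWord_append hu⟩
  obtain ⟨b, hb⟩ := exists_ne (u.head hu)
  have hlong : ¬ List.replicate (u.length + 1) b <:+: u := fun h => by
    simpa using h.length_le
  exact ⟨_, stronglyFreezingWord_append hu (fun h => hb (List.eq_of_mem_replicate h).symm) hlong,
    List.prefix_append u _⟩

/-- Any nonempty word `u` over an alphabet with at least two letters extends to a
strongly freezing word with `u` as a prefix; in fact `u ++ b^k` works for any
letter `b ≠ u₀` and any `k ≥ 1` such that `b^k` does not occur in `u`. -/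
theorem extend_to_strongly_freezing (B : Type*) [Fintype B]
    (hcard : 2 ≤ Fintype.card B) (u : List B) (hu : u ≠ []) :
    (∃ w : List B, StronglyFreezingWord w ∧ u <+: w) ∧
    (∀ (b : B) (k : ℕ), b ≠ u.head hu → 1 ≤ k → ¬ List.replicate k b <:+: u →
      StronglyFreezingWord (u ++ List.replicate k b)) := by
  have : Nontrivial B := Fintype.one_lt_card_iff_nontrivial.mp hcard
  exact (extend_to_strongly_freezing_general B u hu).imp_right fun h b k hb _ =>
    h (List.replicate k b) fun hmem => hb (List.eq_of_mem_replicate hmem).symm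
end
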